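/- arXiv:2405.13801 — 3 statements merged into one kernel-verified Lean document; each statement's English description precedes it below -/
import Mathlib

section
/- Let n ≥ 2 and let y_1, …, y_n ∈ [0,1]. Let ȳ = (1/n)∑_{i=1}^n y_i be the sample mean and s² = (1/(n−1))∑_{i=1}^n (y_i − ȳ)² the sample variance. Then 0 ≤ s² ≤ (n/(n−1))·ȳ(1 − ȳ), and consequently 1/2 − √(1/4 − ((n−1)/n)s²) ≤ ȳ ≤ 1/2 + √(1/4 − ((n−1)/n)s²). -/
open scoped BigOperators

/-! The sample mean and `(n - 1) / n` times the sample variance are the expectation and the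
variance of a uniformly chosen member of the family, so the sample variance is bounded by the
Bhatia-Davis inequality `Var X ≤ (b - 𝔼 X) (𝔼 X - a)`. Its right-hand side, at `𝔼 X = m`, is
`(b - a)² / 4 - (m - (a + b) / 2)²`, so the same inequality confines the sample mean `m` to an
interval centred at the midpoint `(a + b) / 2`. -/

open MeasureTheory ProbabilityTheory

section SampleMeanVariance

variable {ι : Type*} [Fintype ι] {a b : ℝ} {y : ι → ℝ}

/-- The mean of a finite family of real numbers, with value `0` for the empty family. -/
noncomputable def sampleMean (y : ι → ℝ) : ℝ :=
  (∑ i, y i) / Fintype.card ι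

/-- The sample variance of a finite family of real numbers, normalised by `card ι - 1`; the
subtraction is in `ℝ`, and division by zero gives the value `0` for a family with one member. -/
noncomputable def sampleVariance (y : ι → ℝ) : ℝ :=
  (∑ i, (y i - sampleMean y) ^ 2) / ((Fintype.card ι : ℝ) - 1)

theorem sampleVariance_nonneg [Nonempty ι] (y : ι → ℝ) : 0 ≤ sampleVariance y := by
  have one_le_card : (1 : ℝ) ≤ Fintype.card ι := mod_cast Fintype.card_pos
  exact div_nonneg (Finset.sum_nonneg fun i _ ↦ sq_nonneg _) (sub_nonneg.2 one_le_card)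

section UniformOn

variable [MeasurableSpace ι] [MeasurableSingletonClass ι]

theorem integral_uniformOn_univ {E : Type*} [NormedAddCommGroup E] [NormedSpace ℝ E]
    [CompleteSpace E] (f : ι → E) :
    ∫ i, f i ∂uniformOn Set.univ = (Fintype.card ι : ℝ)⁻¹ • ∑ i, f i := by
  simp [uniformOn, ProbabilityTheory.cond, integral_smul_measure]

theorem integral_uniformOn_univ_eq_sampleMean (y : ι → ℝ) :
    ∫ i, y i ∂uniformOn Set.univ = sampleMean y := by
  rw [integral_uniformOn_univ, smul_eq_mul, inv_mul_eq_div, sampleMean]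

theorem variance_uniformOn_univ [Nontrivial ι] (y : ι → ℝ) :
    Var[y; uniformOn Set.univ] =
      ((Fintype.card ι : ℝ) - 1) / Fintype.card ι * sampleVariance y := by
  have card_sub_one_ne_zero : (Fintype.card ι : ℝ) - 1 ≠ 0 :=
    sub_ne_zero.2 (mod_cast Fintype.one_lt_card.ne')
  rw [variance_eq_integral (measurable_of_finite y).aemeasurable,
    integral_uniformOn_univ_eq_sampleMean y, integral_uniformOn_univ, sampleVariance, smul_eq_mul]
  field_simp

end UniformOn

theorem card_sub_one_div_card_mul_sampleVariance_le [Nontrivial ι]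
    (hy : ∀ i, y i ∈ Set.Icc a b) :
    ((Fintype.card ι : ℝ) - 1) / Fintype.card ι * sampleVariance y ≤
      (b - sampleMean y) * (sampleMean y - a) := by
  let _ : MeasurableSpace ι := ⊤
  rw [← variance_uniformOn_univ, ← integral_uniformOn_univ_eq_sampleMean]
  exact variance_le_sub_mul_sub (ae_of_all _ hy) (measurable_of_finite y).aemeasurable

theorem sampleVariance_le [Nontrivial ι] (hy : ∀ i, y i ∈ Set.Icc a b) :
    sampleVariance y ≤ (Fintype.card ι : ℝ) / ((Fintype.card ι : ℝ) - 1) *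
      ((sampleMean y - a) * (b - sampleMean y)) := by
  have one_lt_card : (1 : ℝ) < Fintype.card ι := mod_cast Fintype.one_lt_card
  have ratio_pos : 0 < ((Fintype.card ι : ℝ) - 1) / Fintype.card ι :=
    div_pos (sub_pos.2 one_lt_card) (by positivity)
  rw [← inv_div, le_inv_mul_iff₀ ratio_pos, mul_comm (_ - a)]
  exact card_sub_one_div_card_mul_sampleVariance_le hy

theorem abs_sub_midpoint_le_sqrt {m v : ℝ} (h : v ≤ (b - m) * (m - a)) :
    |m - (a + b) / 2| ≤ √((b - a) ^ 2 / 4 - v) := by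
  refine Real.abs_le_sqrt ?_
  calc (m - (a + b) / 2) ^ 2 = (b - a) ^ 2 / 4 - (b - m) * (m - a) := by ring
    _ ≤ (b - a) ^ 2 / 4 - v := sub_le_sub_left h _

theorem stmt_4_general [Nontrivial ι] (hy : ∀ i, y i ∈ Set.Icc a b) :
    (0 ≤ sampleVariance y ∧
      sampleVariance y ≤ (Fintype.card ι : ℝ) / ((Fintype.card ι : ℝ) - 1) *
        ((sampleMean y - a) * (b - sampleMean y))) ∧
    ((a + b) / 2 - √((b - a) ^ 2 / 4 -
        ((Fintype.card ι : ℝ) - 1) / Fintype.card ι * sampleVariance y) ≤ sampleMean y ∧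
      sampleMean y ≤ (a + b) / 2 + √((b - a) ^ 2 / 4 -
        ((Fintype.card ι : ℝ) - 1) / Fintype.card ι * sampleVariance y)) := by
  have mean_near_midpoint :=
    abs_sub_midpoint_le_sqrt (card_sub_one_div_card_mul_sampleVariance_le hy)
  obtain ⟨upper, lower⟩ := abs_sub_le_iff.1 mean_near_midpoint
  exact ⟨⟨sampleVariance_nonneg y, sampleVariance_le hy⟩,
    sub_le_comm.1 lower, sub_le_iff_le_add'.1 upper⟩

end SampleMeanVariance

theorem stmt_4 (n : ℕ) (hn : 2 ≤ n) (y : Fin n → ℝ) (hy : ∀ i, y i ∈ Set.Icc (0 : ℝ) 1) :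
    (0 ≤ (∑ i, (y i - (∑ j, y j) / n) ^ 2) / ((n : ℝ) - 1) ∧
      (∑ i, (y i - (∑ j, y j) / n) ^ 2) / ((n : ℝ) - 1)
        ≤ ((n : ℝ) / ((n : ℝ) - 1)) * (((∑ i, y i) / n) * (1 - (∑ i, y i) / n))) ∧
    (1 / 2 - Real.sqrt (1 / 4 - (((n : ℝ) - 1) / n) *
        ((∑ i, (y i - (∑ j, y j) / n) ^ 2) / ((n : ℝ) - 1))) ≤ (∑ i, y i) / n ∧
      (∑ i, y i) / n ≤ 1 / 2 + Real.sqrt (1 / 4 - (((n : ℝ) - 1) / n) *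
        ((∑ i, (y i - (∑ j, y j) / n) ^ 2) / ((n : ℝ) - 1)))) := by
  have : Nontrivial (Fin n) := Fin.nontrivial_iff_two_le.2 hn
  simpa [sampleMean, sampleVariance] using stmt_4_general hy
end

section
/- Let n ≥ 2 be an integer, ε₁, ε₂ > 0, and fix observed values ȳ* ∈ ℝ and s²* ∈ ℝ. Define the marginal likelihood L(μ, σ²) = [∫_ℝ (ε₁n/2)e^{−ε₁n|ȳ* − ȳ|} · (n/(2πσ²))^{1/2} e^{−n(ȳ − μ)²/(2σ²)} dȳ] · [∫_0^∞ (ε₂n/2)e^{−ε₂n|s²* − s|} · (((n−1)/(2σ²))^{(n−1)/2}/Γ((n−1)/2)) s^{(n−1)/2 − 1} e^{−(n−1)s/(2σ²)} ds] for μ ∈ ℝ, σ² > 0. Then the integral ∫_0^∞ ∫_ℝ L(μ, σ²)·(σ²)^{−1} dμ dσ² diverges (equals +∞). In particular, the posterior distribution under the improper prior p(μ, σ²) ∝ (σ²)^{−1} is not a proper probability distribution. -/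
open MeasureTheory

/-!
Write `v = σ²`. The normal model is a location family in `μ`, and the gamma model is a scale family
in `v`, with density `v⁻¹ k(s / v)` for a fixed density `k`. All integrands are nonnegative, so
Tonelli's theorem applies: for each `v`, integrating over `μ` replaces the normal factor by the
total mass of the first noise density, and the substitution `t = s / v` then turns the integral of
the gamma factor against `dv / v` into `(∫₀^∞ f(s) / s ds) (∫₀^∞ k(t) dt)`, where `f` is the Laplace
noise density around `s²*`. As `f` is continuous and positive at `0`, the first of these integrals
diverges.
-/

open ProbabilityTheory Set Filter
open scoped ENNReal Topology

theorem lintegral_lintegral_mul_sub {G : Type*} [AddGroup G] [MeasurableSpace G]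
    [MeasurableAdd₂ G] [MeasurableNeg G] {ν : Measure G} [SFinite ν] [ν.IsAddLeftInvariant]
    [ν.IsNegInvariant] {f k : G → ℝ≥0∞} (hf : Measurable f) (hk : Measurable k) :
    ∫⁻ m, ∫⁻ y, f y * k (y - m) ∂ν ∂ν = (∫⁻ y, f y ∂ν) * ∫⁻ z, k z ∂ν := by
  rw [lintegral_lintegral_swap (by fun_prop), ← lintegral_mul_const _ hf]
  refine lintegral_congr fun y ↦ ?_
  rw [lintegral_const_mul _ (by fun_prop), lintegral_sub_left_eq_self]

theorem setLIntegral_Ioi_comp_div {s : ℝ} (hs : 0 < s) (k : ℝ → ℝ≥0∞) :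
    ∫⁻ v in Ioi 0, ENNReal.ofReal (s / v ^ 2) * k (s / v) = ∫⁻ t in Ioi 0, k t := by
  have himage : (s / ·) '' Ioi 0 = Ioi 0 := by
    ext t
    refine ⟨?_, fun ht ↦ ⟨s / t, div_pos hs ht, div_div_cancel₀ hs.ne'⟩⟩
    rintro ⟨v, hv, rfl⟩
    exact div_pos hs hv
  have hderiv : ∀ v ∈ Ioi (0 : ℝ), HasDerivWithinAt (s / ·) (-(s / v ^ 2)) (Ioi 0) v := by
    intro v hv
    simpa [div_eq_mul_inv] using ((hasDerivAt_inv (ne_of_gt hv)).const_mul s).hasDerivWithinAt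
  have hinj : InjOn (s / ·) (Ioi (0 : ℝ)) := fun a _ b _ hab ↦ by
    simpa [div_eq_mul_inv, hs.ne'] using hab
  have hcov := lintegral_image_eq_lintegral_abs_deriv_mul measurableSet_Ioi hderiv hinj k
  rw [himage] at hcov
  rw [hcov]
  refine setLIntegral_congr_fun measurableSet_Ioi fun v _ ↦ ?_
  rw [abs_neg, abs_of_nonneg (by positivity)]

theorem lintegral_lintegral_mul_scale {f k : ℝ → ℝ≥0∞} (hf : Measurable f) (hk : Measurable k) :
    ∫⁻ v in Ioi 0, (∫⁻ s in Ioi 0, f s * (ENNReal.ofReal v⁻¹ * k (s / v))) * ENNReal.ofReal v⁻¹ =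
      (∫⁻ s in Ioi 0, f s * ENNReal.ofReal s⁻¹) * ∫⁻ t in Ioi 0, k t := by
  have hscale : ∀ s ∈ Ioi (0 : ℝ),
      ∫⁻ v in Ioi 0, f s * (ENNReal.ofReal v⁻¹ * k (s / v)) * ENNReal.ofReal v⁻¹ =
        f s * ENNReal.ofReal s⁻¹ * ∫⁻ t in Ioi 0, k t := by
    intro s (hs : 0 < s)
    rw [← setLIntegral_Ioi_comp_div hs k, ← lintegral_const_mul _ (by fun_prop)]
    refine setLIntegral_congr_fun measurableSet_Ioi fun v (hv : 0 < v) ↦ ?_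
    have hweight : ENNReal.ofReal v⁻¹ * ENNReal.ofReal v⁻¹ =
        ENNReal.ofReal s⁻¹ * ENNReal.ofReal (s / v ^ 2) := by
      rw [← ENNReal.ofReal_mul (by positivity), ← ENNReal.ofReal_mul (by positivity)]
      congr 1
      field_simp
    calc f s * (ENNReal.ofReal v⁻¹ * k (s / v)) * ENNReal.ofReal v⁻¹
        = f s * (ENNReal.ofReal v⁻¹ * ENNReal.ofReal v⁻¹) * k (s / v) := by ring
      _ = f s * ENNReal.ofReal s⁻¹ * (ENNReal.ofReal (s / v ^ 2) * k (s / v)) := by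
        rw [hweight]; ring
  calc ∫⁻ v in Ioi 0, (∫⁻ s in Ioi 0, f s * (ENNReal.ofReal v⁻¹ * k (s / v))) * ENNReal.ofReal v⁻¹
      = ∫⁻ v in Ioi 0, ∫⁻ s in Ioi 0,
          f s * (ENNReal.ofReal v⁻¹ * k (s / v)) * ENNReal.ofReal v⁻¹ := by
        refine lintegral_congr fun v ↦ (lintegral_mul_const _ (by fun_prop)).symm
    _ = ∫⁻ s in Ioi 0, ∫⁻ v in Ioi 0,
          f s * (ENNReal.ofReal v⁻¹ * k (s / v)) * ENNReal.ofReal v⁻¹ :=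
        lintegral_lintegral_swap (by fun_prop)
    _ = ∫⁻ s in Ioi 0, f s * ENNReal.ofReal s⁻¹ * ∫⁻ t in Ioi 0, k t :=
        setLIntegral_congr_fun measurableSet_Ioi hscale
    _ = _ := lintegral_mul_const _ (by fun_prop)

theorem lintegral_locationScale {f₁ f₂ k₂ : ℝ → ℝ≥0∞} {k₁ : ℝ → ℝ → ℝ≥0∞}
    (hf₁ : Measurable f₁) (hf₂ : Measurable f₂) (hk₁ : ∀ v > 0, Measurable (k₁ v))
    (hk₁_one : ∀ v > 0, ∫⁻ z, k₁ v z = 1) (hk₂ : Measurable k₂) :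
    ∫⁻ v in Ioi 0, ∫⁻ m, (∫⁻ y, f₁ y * k₁ v (y - m)) *
        (∫⁻ s in Ioi 0, f₂ s * (ENNReal.ofReal v⁻¹ * k₂ (s / v))) * ENNReal.ofReal v⁻¹ =
      (∫⁻ y, f₁ y) * ((∫⁻ s in Ioi 0, f₂ s * ENNReal.ofReal s⁻¹) * ∫⁻ t in Ioi 0, k₂ t) := by
  rw [← lintegral_lintegral_mul_scale hf₂ hk₂, ← lintegral_const_mul _ (by fun_prop)]
  refine setLIntegral_congr_fun measurableSet_Ioi fun v hv ↦ ?_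
  have hk₁_v := hk₁ v hv
  simp_rw [mul_assoc]
  rw [lintegral_mul_const _ (by fun_prop), lintegral_lintegral_mul_sub hf₁ hk₁_v,
    hk₁_one v hv, mul_one]

theorem setLIntegral_Ioo_inv_eq_top {δ : ℝ} (hδ : 0 < δ) :
    ∫⁻ s in Ioo 0 δ, ENNReal.ofReal s⁻¹ = ⊤ := by
  by_contra hfinite
  have hint : IntegrableOn (·⁻¹) (Ioo 0 δ) := by
    refine (lintegral_ofReal_ne_top_iff_integrable (by fun_prop) ?_).1 hfinite
    filter_upwards [ae_restrict_mem measurableSet_Ioo] with s hs using inv_nonneg.2 hs.1.le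
  rw [← intervalIntegrable_iff_integrableOn_Ioo_of_le hδ.le, intervalIntegrable_inv_iff] at hint
  simp [hδ.ne] at hint

theorem setLIntegral_Ioi_mul_inv_eq_top_of_tendsto {f : ℝ → ℝ≥0∞} {l : ℝ≥0∞} (hl : l ≠ 0)
    (hf : Tendsto f (𝓝[>] 0) (𝓝 l)) : ∫⁻ s in Ioi 0, f s * ENNReal.ofReal s⁻¹ = ⊤ := by
  obtain ⟨c, hc, hcl⟩ := exists_between hl.bot_lt
  obtain ⟨δ, hδ, hsub⟩ := mem_nhdsGT_iff_exists_Ioo_subset.1 (hf.eventually_const_lt hcl)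
  rw [eq_top_iff]
  calc ⊤ = ∫⁻ s in Ioo 0 δ, c * ENNReal.ofReal s⁻¹ := by
        rw [lintegral_const_mul _ (by fun_prop), setLIntegral_Ioo_inv_eq_top hδ,
          ENNReal.mul_top hc.ne']
    _ ≤ ∫⁻ s in Ioo 0 δ, f s * ENNReal.ofReal s⁻¹ :=
        setLIntegral_mono' measurableSet_Ioo fun s hs ↦ by gcongr; exact (hsub hs).le
    _ ≤ ∫⁻ s in Ioi 0, f s * ENNReal.ofReal s⁻¹ := lintegral_mono_set Ioo_subset_Ioi_self

theorem ofReal_integral_mul_eq_lintegral {α : Type*} [MeasurableSpace α] {ν : Measure α}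
    {f k : α → ℝ} {C : ℝ} (hf : AEStronglyMeasurable f ν) (hf_nonneg : 0 ≤ᵐ[ν] f)
    (hf_le : ∀ᵐ x ∂ν, f x ≤ C) (hk : Integrable k ν) (hk_nonneg : 0 ≤ᵐ[ν] k) :
    ENNReal.ofReal (∫ x, f x * k x ∂ν) = ∫⁻ x, ENNReal.ofReal (f x) * ENNReal.ofReal (k x) ∂ν := by
  have hf_norm_le : ∀ᵐ x ∂ν, ‖f x‖ ≤ C := by
    filter_upwards [hf_nonneg, hf_le] with x hx hxC using (Real.norm_of_nonneg hx).trans_le hxC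
  rw [ofReal_integral_eq_lintegral_ofReal (hk.bdd_mul hf hf_norm_le)
    (hf_nonneg.mul_nonneg hk_nonneg)]
  exact lintegral_congr_ae (hf_nonneg.mono fun x hx ↦ ENNReal.ofReal_mul hx)

/-- Density at `x` of the Laplace distribution with location `m` and rate `lam` (scale
`lam⁻¹`); it links each observed statistic to its unperturbed value. -/
noncomputable def laplacePDFReal (m lam x : ℝ) : ℝ :=
  lam / 2 * Real.exp (-lam * |m - x|)

/-- The `ℝ≥0∞`-valued Laplace density, the form to which Tonelli's theorem applies. -/
noncomputable def laplacePDF (m lam x : ℝ) : ℝ≥0∞ :=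
  ENNReal.ofReal (laplacePDFReal m lam x)

section Laplace

variable {m lam : ℝ}

theorem laplacePDFReal_pos (hlam : 0 < lam) (x : ℝ) : 0 < laplacePDFReal m lam x := by
  unfold laplacePDFReal
  positivity

theorem laplacePDFReal_le (hlam : 0 < lam) (x : ℝ) : laplacePDFReal m lam x ≤ lam / 2 := by
  refine mul_le_of_le_one_right (by positivity) (Real.exp_le_one_iff.2 ?_)
  rw [neg_mul, neg_nonpos]
  positivity

theorem continuous_laplacePDFReal : Continuous (laplacePDFReal m lam) := by
  unfold laplacePDFReal
  fun_prop

theorem laplacePDF_ne_zero (hlam : 0 < lam) (x : ℝ) : laplacePDF m lam x ≠ 0 :=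
  (ENNReal.ofReal_pos.2 (laplacePDFReal_pos hlam x)).ne'

theorem continuous_laplacePDF : Continuous (laplacePDF m lam) :=
  ENNReal.continuous_ofReal.comp continuous_laplacePDFReal

theorem lintegral_laplacePDF_ne_zero (hlam : 0 < lam) : ∫⁻ x, laplacePDF m lam x ≠ 0 := by
  have hsupport : Function.support (laplacePDF m lam) = univ :=
    Function.support_eq_univ (laplacePDF_ne_zero hlam)
  rw [← pos_iff_ne_zero, lintegral_pos_iff_support continuous_laplacePDF.measurable, hsupport]
  simp

theorem ofReal_integral_laplacePDFReal_mul (hlam : 0 < lam) {ν : Measure ℝ} {k : ℝ → ℝ}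
    (hk : Integrable k ν) (hk_nonneg : 0 ≤ᵐ[ν] k) :
    ENNReal.ofReal (∫ x, laplacePDFReal m lam x * k x ∂ν) =
      ∫⁻ x, laplacePDF m lam x * ENNReal.ofReal (k x) ∂ν :=
  ofReal_integral_mul_eq_lintegral continuous_laplacePDFReal.aestronglyMeasurable
    (.of_forall fun x ↦ (laplacePDFReal_pos hlam x).le) (.of_forall (laplacePDFReal_le hlam))
    hk hk_nonneg

end Laplace

section Gamma

variable {a r : ℝ}

theorem measurable_gammaPDF : Measurable (gammaPDF a r) :=
  (measurable_gammaPDFReal a r).ennreal_ofReal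

theorem integrable_gammaPDFReal (ha : 0 < a) (hr : 0 < r) : Integrable (gammaPDFReal a r) :=
  (lintegral_ofReal_ne_top_iff_integrable (by fun_prop)
    (.of_forall (gammaPDFReal_nonneg ha hr))).1
    ((lintegral_gammaPDF_eq_one ha hr).trans_ne ENNReal.one_ne_top)

theorem setLIntegral_Ioi_gammaPDF_ne_zero (ha : 0 < a) (hr : 0 < r) :
    ∫⁻ x in Ioi 0, gammaPDF a r x ≠ 0 := by
  have hsupport : Ioi 0 ⊆ Function.support (gammaPDF a r) := fun x hx ↦
    (ENNReal.ofReal_pos.2 (gammaPDFReal_pos ha hr hx)).ne'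
  rw [← pos_iff_ne_zero, setLIntegral_pos_iff measurable_gammaPDF, inter_eq_right.2 hsupport]
  simp

theorem gammaPDFReal_div_rate {v : ℝ} (hr : 0 ≤ r) (hv : 0 < v) (x : ℝ) :
    gammaPDFReal a (r / v) x = v⁻¹ * gammaPDFReal a r (x / v) := by
  by_cases hx : 0 ≤ x
  · rw [gammaPDFReal, gammaPDFReal, if_pos hx, if_pos (by positivity),
      Real.div_rpow hr hv.le, Real.div_rpow hx hv.le, Real.rpow_sub_one hv.ne',
      div_mul_comm r v x, mul_comm (x / v) r]
    field_simp
  · have hxv : ¬ 0 ≤ x / v := (div_neg_of_neg_of_pos (not_le.1 hx) hv).not_ge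
    simp only [gammaPDFReal, if_neg hx, if_neg hxv, mul_zero]

theorem gammaPDF_div_rate {v : ℝ} (hr : 0 ≤ r) (hv : 0 < v) (x : ℝ) :
    gammaPDF a (r / v) x = ENNReal.ofReal v⁻¹ * gammaPDF a r (x / v) := by
  rw [gammaPDF, gammaPDFReal_div_rate hr hv, ENNReal.ofReal_mul (inv_nonneg.2 hv.le), gammaPDF]

end Gamma

section NormalModel

variable {m m₁ m₂ lam lam₁ lam₂ n d v : ℝ}

theorem gaussianPDFReal_zero_toNNReal_div (hn : 0 < n) (hv : 0 < v) (x : ℝ) :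
    gaussianPDFReal 0 (v / n).toNNReal x =
      √(n / (2 * Real.pi * v)) * Real.exp (-(n * x ^ 2) / (2 * v)) := by
  rw [gaussianPDFReal, Real.coe_toNNReal _ (by positivity), ← Real.sqrt_inv, sub_zero]
  congr 2 <;> field_simp

theorem ofReal_integral_laplacePDFReal_mul_gaussian (hlam : 0 < lam) (hn : 0 < n) (hv : 0 < v)
    (μ : ℝ) :
    ENNReal.ofReal (∫ y, laplacePDFReal m lam y *
        (√(n / (2 * Real.pi * v)) * Real.exp (-(n * (y - μ) ^ 2) / (2 * v)))) =
      ∫⁻ y, laplacePDF m lam y * gaussianPDF 0 (v / n).toNNReal (y - μ) := by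
  simp_rw [← gaussianPDFReal_zero_toNNReal_div hn hv]
  exact ofReal_integral_laplacePDFReal_mul hlam ((integrable_gaussianPDFReal _ _).comp_sub_right μ)
    (.of_forall fun y ↦ gaussianPDFReal_nonneg _ _ _)

theorem ofReal_setIntegral_laplacePDFReal_mul_gamma (hlam : 0 < lam) (hd : 0 < d) (hv : 0 < v) :
    ENNReal.ofReal (∫ s in Ioi 0, laplacePDFReal m lam s *
        ((d / (2 * v)) ^ (d / 2) / Real.Gamma (d / 2) * s ^ (d / 2 - 1) *
          Real.exp (-(d * s) / (2 * v)))) =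
      ∫⁻ s in Ioi 0, laplacePDF m lam s *
        (ENNReal.ofReal v⁻¹ * gammaPDF (d / 2) (d / 2) (s / v)) := by
  have hdensity : ∀ s ∈ Ioi (0 : ℝ), (d / (2 * v)) ^ (d / 2) / Real.Gamma (d / 2) *
      s ^ (d / 2 - 1) * Real.exp (-(d * s) / (2 * v)) = gammaPDFReal (d / 2) (d / 2 / v) s := by
    intro s hs
    rw [gammaPDFReal, if_pos (le_of_lt hs), div_div, neg_div, div_mul_eq_mul_div d]
  simp_rw [← gammaPDF_div_rate (half_pos hd).le hv]
  rw [setIntegral_congr_fun measurableSet_Ioi fun s hs ↦ congrArg (_ * ·) (hdensity s hs)]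
  exact ofReal_integral_laplacePDFReal_mul hlam
    (integrable_gammaPDFReal (by positivity) (by positivity)).integrableOn
    (.of_forall (gammaPDFReal_nonneg (by positivity) (by positivity)))

theorem lintegral_laplacePDF_gaussianPDF_gammaPDF_eq_top (hlam₁ : 0 < lam₁) (hlam₂ : 0 < lam₂)
    (hn : 0 < n) (hd : 0 < d) :
    ∫⁻ v in Ioi 0, ∫⁻ μ,
      (∫⁻ y, laplacePDF m₁ lam₁ y * gaussianPDF 0 (v / n).toNNReal (y - μ)) *
        (∫⁻ s in Ioi 0, laplacePDF m₂ lam₂ s *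
          (ENNReal.ofReal v⁻¹ * gammaPDF (d / 2) (d / 2) (s / v))) * ENNReal.ofReal v⁻¹ = ⊤ := by
  have hvariance (v : ℝ) (hv : v > 0) : (v / n).toNNReal ≠ 0 :=
    (Real.toNNReal_pos.2 (div_pos hv hn)).ne'
  have hdiverges : ∫⁻ s in Ioi 0, laplacePDF m₂ lam₂ s * ENNReal.ofReal s⁻¹ = ⊤ :=
    setLIntegral_Ioi_mul_inv_eq_top_of_tendsto (laplacePDF_ne_zero hlam₂ 0)
      continuous_laplacePDF.continuousWithinAt
  rw [lintegral_locationScale continuous_laplacePDF.measurable continuous_laplacePDF.measurable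
    (fun v _ ↦ measurable_gaussianPDF _ _)
    (fun v hv ↦ lintegral_gaussianPDF_eq_one 0 (hvariance v hv)) measurable_gammaPDF, hdiverges,
    ENNReal.top_mul (setLIntegral_Ioi_gammaPDF_ne_zero (half_pos hd) (half_pos hd)),
    ENNReal.mul_top (lintegral_laplacePDF_ne_zero hlam₁)]

end NormalModel

theorem stmt_5_general (n : ℝ) (hn : 1 < n) (ε₁ ε₂ : ℝ) (hε₁ : 0 < ε₁) (hε₂ : 0 < ε₂)
    (ybarStar s2Star : ℝ) (L : ℝ → ℝ → ℝ)
    (hL : ∀ μ σ2 : ℝ, 0 < σ2 → L μ σ2 =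
      (∫ ybar : ℝ, (ε₁ * n / 2) * Real.exp (-(ε₁ * n) * |ybarStar - ybar|) *
          (√(n / (2 * Real.pi * σ2)) * Real.exp (-(n * (ybar - μ) ^ 2) / (2 * σ2)))) *
      (∫ s in Ioi (0 : ℝ), (ε₂ * n / 2) * Real.exp (-(ε₂ * n) * |s2Star - s|) *
          ((((n - 1) / (2 * σ2)) ^ ((n - 1) / 2) / Real.Gamma ((n - 1) / 2)) *
            s ^ ((n - 1) / 2 - 1) * Real.exp (-((n - 1) * s) / (2 * σ2))))) :
    ∫⁻ σ2 in Ioi (0 : ℝ), ∫⁻ μ : ℝ, ENNReal.ofReal (L μ σ2 * σ2⁻¹) = ⊤ := by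
  have hn_pos : 0 < n := one_pos.trans hn
  have hd : 0 < n - 1 := sub_pos.2 hn
  have hlam₁ : 0 < ε₁ * n := mul_pos hε₁ hn_pos
  have hlam₂ : 0 < ε₂ * n := mul_pos hε₂ hn_pos
  rw [← lintegral_laplacePDF_gaussianPDF_gammaPDF_eq_top (m₁ := ybarStar) (m₂ := s2Star)
    hlam₁ hlam₂ hn_pos hd]
  refine setLIntegral_congr_fun measurableSet_Ioi fun v (hv : 0 < v) ↦ lintegral_congr fun μ ↦ ?_
  rw [hL μ v hv, ENNReal.ofReal_mul' (by positivity),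
    ENNReal.ofReal_mul (integral_nonneg fun y ↦ by positivity),
    ← ofReal_integral_laplacePDFReal_mul_gaussian hlam₁ hn_pos hv,
    ← ofReal_setIntegral_laplacePDFReal_mul_gamma hlam₂ hd hv]
  rfl

theorem stmt_5 (n : ℕ) (hn : 2 ≤ n) (ε₁ ε₂ : ℝ) (hε₁ : 0 < ε₁) (hε₂ : 0 < ε₂)
    (ybarStar s2Star : ℝ) (L : ℝ → ℝ → ℝ)
    (hL : ∀ μ σ2 : ℝ, 0 < σ2 → L μ σ2 =
      (∫ ybar : ℝ, (ε₁ * n / 2) * Real.exp (-(ε₁ * n) * |ybarStar - ybar|) *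
          (Real.sqrt ((n : ℝ) / (2 * Real.pi * σ2)) *
            Real.exp (-((n : ℝ) * (ybar - μ) ^ 2) / (2 * σ2)))) *
      (∫ s in Set.Ioi (0 : ℝ), (ε₂ * n / 2) * Real.exp (-(ε₂ * n) * |s2Star - s|) *
          (((((n : ℝ) - 1) / (2 * σ2)) ^ (((n : ℝ) - 1) / 2) / Real.Gamma (((n : ℝ) - 1) / 2)) *
            s ^ (((n : ℝ) - 1) / 2 - 1) * Real.exp (-(((n : ℝ) - 1) * s) / (2 * σ2))))) :
    (∫⁻ σ2 in Set.Ioi (0 : ℝ), ∫⁻ μ : ℝ, ENNReal.ofReal (L μ σ2 * σ2⁻¹)) = ⊤ :=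
  stmt_5_general n (by exact_mod_cast hn) ε₁ ε₂ hε₁ hε₂ ybarStar s2Star L hL
end

section
/- Let α > 0, β > λ ≥ 0, and τ > 0. Then ∫_0^∞ (λ/2)e^{−λ|τ − μ|} · (β^α/Γ(α)) μ^{α−1} e^{−βμ} dμ = (λβ^α/(2Γ(α))) · [ e^{−λτ} · γ(α, (β − λ)τ)/(β − λ)^α + e^{λτ} · Γ(α, (β + λ)τ)/(β + λ)^α ], where γ(α, x) = ∫_0^x u^{α−1}e^{−u} du is the lower incomplete Gamma function and Γ(α, x) = ∫_x^∞ u^{α−1}e^{−u} du is the upper incomplete Gamma function. -/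
open MeasureTheory

/-!
Splitting `(0, ∞)` at `τ` resolves the absolute value: the Laplace factor becomes
`exp (-λτ) * exp (λμ)` on `(0, τ]` and `exp (λτ) * exp (-λμ)` on `(τ, ∞)`. Merged with the factor
`exp (-βμ)` of the Gamma density, it leaves Gamma densities of rates `β - λ` and `β + λ`, up to
constants. Rescaling `u = (β ∓ λ) μ` turns the two pieces into incomplete Gamma functions.
-/

section

open Real Set

/-- The lower incomplete Gamma function `γ(s, x)`, of interest for `0 < s` and `0 ≤ x`; the integral
diverges at `0`, and takes the junk value `0`, when `s ≤ 0 < x`. -/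
noncomputable def lowerIncompleteGamma (s x : ℝ) : ℝ :=
  ∫ u in (0 : ℝ)..x, u ^ (s - 1) * exp (-u)

/-- The upper incomplete Gamma function `Γ(s, x)`, of interest for `0 ≤ x`, with `0 < s` if
`x = 0`. -/
noncomputable def upperIncompleteGamma (s x : ℝ) : ℝ :=
  ∫ u in Ioi x, u ^ (s - 1) * exp (-u)

lemma rpow_sub_one_mul_exp_neg_mul {c x : ℝ} (hc : 0 < c) (hx : 0 ≤ x) (s : ℝ) :
    x ^ (s - 1) * exp (-c * x) = c / c ^ s * ((c * x) ^ (s - 1) * exp (-(c * x))) := by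
  have hcs : c ^ s ≠ 0 := (rpow_pos_of_pos hc s).ne'
  rw [mul_rpow hc.le hx, rpow_sub_one hc.ne', neg_mul]
  field_simp

lemma integral_rpow_sub_one_mul_exp_neg_mul {c t : ℝ} (hc : 0 < c) (ht : 0 ≤ t) (s : ℝ) :
    ∫ x in (0 : ℝ)..t, x ^ (s - 1) * exp (-c * x) = lowerIncompleteGamma s (c * t) / c ^ s := by
  calc ∫ x in (0 : ℝ)..t, x ^ (s - 1) * exp (-c * x)
      = ∫ x in (0 : ℝ)..t, c / c ^ s * ((c * x) ^ (s - 1) * exp (-(c * x))) :=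
        intervalIntegral.integral_congr fun x hx ↦
          rpow_sub_one_mul_exp_neg_mul hc (uIcc_of_le ht ▸ hx).1 s
    _ = c / c ^ s * (c⁻¹ * lowerIncompleteGamma s (c * t)) := by
        rw [intervalIntegral.integral_const_mul,
          intervalIntegral.integral_comp_mul_left (fun u ↦ u ^ (s - 1) * exp (-u)) hc.ne',
          mul_zero, smul_eq_mul, lowerIncompleteGamma]
    _ = lowerIncompleteGamma s (c * t) / c ^ s := by field_simp

lemma integral_Ioi_rpow_sub_one_mul_exp_neg_mul {c t : ℝ} (hc : 0 < c) (ht : 0 ≤ t) (s : ℝ) :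
    ∫ x in Ioi t, x ^ (s - 1) * exp (-c * x) = upperIncompleteGamma s (c * t) / c ^ s := by
  calc ∫ x in Ioi t, x ^ (s - 1) * exp (-c * x)
      = ∫ x in Ioi t, c / c ^ s * ((c * x) ^ (s - 1) * exp (-(c * x))) :=
        setIntegral_congr_fun measurableSet_Ioi fun x hx ↦
          rpow_sub_one_mul_exp_neg_mul hc (ht.trans hx.le) s
    _ = c / c ^ s * (c⁻¹ * upperIncompleteGamma s (c * t)) := by
        rw [integral_const_mul,
          integral_comp_mul_left_Ioi (fun u ↦ u ^ (s - 1) * exp (-u)) t hc,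
          smul_eq_mul, upperIncompleteGamma]
    _ = upperIncompleteGamma s (c * t) / c ^ s := by field_simp

lemma integrableOn_Ioi_rpow_sub_one_mul_exp_neg_mul {c s : ℝ} (hs : 0 < s) (hc : 0 < c) :
    IntegrableOn (fun x ↦ x ^ (s - 1) * exp (-c * x)) (Ioi 0) := by
  simpa only [rpow_one] using
    integrableOn_rpow_mul_exp_neg_mul_rpow (by linarith : -1 < s - 1) one_pos hc

lemma integral_Ioi_exp_neg_mul_abs_sub_smul {E : Type*} [NormedAddCommGroup E] [NormedSpace ℝ E]
    {ν : Measure ℝ} {f : ℝ → E} {a c t : ℝ} (hat : a ≤ t)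
    (hleft : IntegrableOn (fun x ↦ exp (c * x) • f x) (Ioc a t) ν)
    (hright : IntegrableOn (fun x ↦ exp (-c * x) • f x) (Ioi t) ν) :
    ∫ x in Ioi a, exp (-c * |t - x|) • f x ∂ν =
      exp (-c * t) • (∫ x in a..t, exp (c * x) • f x ∂ν) +
        exp (c * t) • ∫ x in Ioi t, exp (-c * x) • f x ∂ν := by
  have eqOn_left : EqOn (fun x ↦ exp (-c * |t - x|) • f x)
      (fun x ↦ exp (-c * t) • exp (c * x) • f x) (Ioc a t) := fun x hx ↦ by
    simp only [smul_smul, ← exp_add, abs_of_nonneg (sub_nonneg.2 hx.2)]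
    ring_nf
  have eqOn_right : EqOn (fun x ↦ exp (-c * |t - x|) • f x)
      (fun x ↦ exp (c * t) • exp (-c * x) • f x) (Ioi t) := fun x hx ↦ by
    simp only [smul_smul, ← exp_add, abs_of_nonpos (sub_nonpos.2 (mem_Ioi.1 hx).le)]
    ring_nf
  rw [← Ioc_union_Ioi_eq_Ioi hat,
    setIntegral_union Ioc_disjoint_Ioi_same measurableSet_Ioi
      (IntegrableOn.congr_fun (hleft.smul _) eqOn_left.symm measurableSet_Ioc)
      (IntegrableOn.congr_fun (hright.smul _) eqOn_right.symm measurableSet_Ioi),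
    setIntegral_congr_fun measurableSet_Ioc eqOn_left,
    setIntegral_congr_fun measurableSet_Ioi eqOn_right,
    integral_smul, integral_smul, intervalIntegral.integral_of_le hat]

lemma integral_Ioi_exp_neg_mul_abs_sub_mul_rpow_mul_exp {s b c t : ℝ} (hs : 0 < s) (hcb : |c| < b)
    (ht : 0 ≤ t) :
    ∫ x in Ioi 0, exp (-c * |t - x|) * (x ^ (s - 1) * exp (-b * x)) =
      exp (-c * t) * (lowerIncompleteGamma s ((b - c) * t) / (b - c) ^ s) +
        exp (c * t) * (upperIncompleteGamma s ((b + c) * t) / (b + c) ^ s) := by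
  have hsub : 0 < b - c := sub_pos.2 (abs_lt.1 hcb).2
  have hadd : 0 < b + c := neg_lt_iff_pos_add'.1 (abs_lt.1 hcb).1
  have tilt_left (x : ℝ) : exp (c * x) • (x ^ (s - 1) * exp (-b * x)) =
      x ^ (s - 1) * exp (-(b - c) * x) := by
    rw [smul_eq_mul, mul_left_comm, ← exp_add]
    ring_nf
  have tilt_right (x : ℝ) : exp (-c * x) • (x ^ (s - 1) * exp (-b * x)) =
      x ^ (s - 1) * exp (-(b + c) * x) := by
    rw [smul_eq_mul, mul_left_comm, ← exp_add]
    ring_nf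
  have split := integral_Ioi_exp_neg_mul_abs_sub_smul (ν := volume) (c := c)
    (f := fun x ↦ x ^ (s - 1) * exp (-b * x)) ht
    (by simpa only [tilt_left] using
      (integrableOn_Ioi_rpow_sub_one_mul_exp_neg_mul hs hsub).mono_set Ioc_subset_Ioi_self)
    (by simpa only [tilt_right] using
      (integrableOn_Ioi_rpow_sub_one_mul_exp_neg_mul hs hadd).mono_set (Ioi_subset_Ioi ht))
  simp only [tilt_left, tilt_right] at split
  simpa only [smul_eq_mul, integral_rpow_sub_one_mul_exp_neg_mul hsub ht,
    integral_Ioi_rpow_sub_one_mul_exp_neg_mul hadd ht] using split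

theorem stmt_10_general {α β lam τ : ℝ} (hα : 0 < α) (hβ : |lam| < β) (hτ : 0 ≤ τ) :
    ∫ μ in Ioi (0 : ℝ),
        (lam / 2) * exp (-lam * |τ - μ|) * ((β ^ α / Gamma α) * μ ^ (α - 1) * exp (-β * μ)) =
      lam * β ^ α / (2 * Gamma α) *
        (exp (-lam * τ) * lowerIncompleteGamma α ((β - lam) * τ) / (β - lam) ^ α +
          exp (lam * τ) * upperIncompleteGamma α ((β + lam) * τ) / (β + lam) ^ α) := by
  have pull_constants (μ : ℝ) :
      (lam / 2) * exp (-lam * |τ - μ|) * ((β ^ α / Gamma α) * μ ^ (α - 1) * exp (-β * μ)) =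
        lam * β ^ α / (2 * Gamma α) *
          (exp (-lam * |τ - μ|) * (μ ^ (α - 1) * exp (-β * μ))) := by ring
  simp only [pull_constants, integral_const_mul, mul_div_assoc,
    integral_Ioi_exp_neg_mul_abs_sub_mul_rpow_mul_exp hα hβ hτ]

end

theorem stmt_10 (α β lam τ : ℝ) (hα : 0 < α) (hlam : 0 ≤ lam) (hβ : lam < β) (hτ : 0 < τ) :
    ∫ μ in Set.Ioi (0 : ℝ),
        (lam / 2) * Real.exp (-lam * |τ - μ|) *
          ((β ^ α / Real.Gamma α) * μ ^ (α - 1) * Real.exp (-β * μ))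
      = lam * β ^ α / (2 * Real.Gamma α) *
        (Real.exp (-lam * τ) *
            (∫ u in (0 : ℝ)..((β - lam) * τ), u ^ (α - 1) * Real.exp (-u)) / (β - lam) ^ α +
          Real.exp (lam * τ) *
            (∫ u in Set.Ioi ((β + lam) * τ), u ^ (α - 1) * Real.exp (-u)) / (β + lam) ^ α) :=
  stmt_10_general hα ((abs_of_nonneg hlam).trans_lt hβ) hτ.le
end
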